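/- Miura transformation between the lifted mKP and KP solution forms. Let p be a scattering function, and w₊, w₋ resolvent kernels for p. For x, y, t ∈ ℝ set q^x := p^x_{1,0} − p^x_{0,1}, K₊ := q^x + w₊∗q^x + q^x∗w₋ + w₊∗q^x∗w₋, K₋ := q^x + w₋∗q^x + q^x∗w₊ + w₋∗q^x∗w₊, and define the lifted mKP solution components g(x,y,t) := (w₊ − w₋)(0,0;x,y,t) and f(x,y,t) := (K₋ − K₊)(0,0;x,y,t), and the KP solution component g^{KP}(x,y,t) := w₊(0,0;x,y,t) (the kernel of G = PV solving the GLM equation P = G(id − P), as in Theorem 1). Then the Miura relation holds exactly: ∂_x g(x,y,t) + g(x,y,t)² + f(x,y,t) = 2·∂_x g^{KP}(x,y,t) for all x, y, t ∈ ℝ. -/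

import Mathlib

open MeasureTheory Filter

namespace NCKP

/-- `m × m` complex matrices. -/
abbrev Mat (m : ℕ) := Matrix (Fin m) (Fin m) ℂ

/-- Matrix-valued kernels on `ℝ²`. -/
abbrev Ker (m : ℕ) := ℝ → ℝ → Mat m

/-- Kernel product `(k₁∗k₂)(z,ζ) := ∫_{-∞}^0 k₁(z,ξ)·k₂(ξ,ζ) dξ`, entrywise Bochner integral. -/
noncomputable def conv {m : ℕ} (k₁ k₂ : Ker m) : Ker m :=
  fun z ζ => Matrix.of fun i j => ∫ ξ in Set.Iic (0:ℝ), (k₁ z ξ * k₂ ξ ζ) i j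

/-- `∂_z^a ∂_ζ^b` of a kernel, entrywise. -/
noncomputable def pder {m : ℕ} (a b : ℕ) (p : Ker m) : Ker m :=
  fun z ζ => Matrix.of fun i j =>
    iteratedDeriv a (fun z' => iteratedDeriv b (fun ζ' => p z' ζ' i j) ζ) z

/-- `p^x_{a,b}(z,ζ) := (∂_z^a ∂_ζ^b p)(z+x, ζ+x)`. -/
noncomputable def pSh {m : ℕ} (p : Ker m) (x : ℝ) (a b : ℕ) : Ker m :=
  fun z ζ => pder a b p (z + x) (ζ + x)

/-- `P̂₁ := p^x_{1,0} + p^x_{0,1}`. -/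
noncomputable def pHat1 {m : ℕ} (p : Ker m) (x : ℝ) : Ker m := pSh p x 1 0 + pSh p x 0 1

/-- `P_{[a,b]} := p^x_{a,b} − p^x_{b,a}`. -/
noncomputable def pBr {m : ℕ} (p : Ker m) (x : ℝ) (a b : ℕ) : Ker m := pSh p x a b - pSh p x b a

/-- Bounded, absolutely integrable over `(-∞,0]` in each argument, and tending to `0`
as either argument tends to `−∞` (entrywise). -/
def KernelDecay {m : ℕ} (k : Ker m) : Prop :=
  (∃ C, ∀ (z ζ : ℝ) (i j : Fin m), ‖k z ζ i j‖ ≤ C) ∧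
  (∀ (ζ : ℝ) (i j : Fin m), IntegrableOn (fun z => k z ζ i j) (Set.Iic (0:ℝ))) ∧
  (∀ (z : ℝ) (i j : Fin m), IntegrableOn (fun ζ => k z ζ i j) (Set.Iic (0:ℝ))) ∧
  (∀ (ζ : ℝ) (i j : Fin m), Tendsto (fun z => k z ζ i j) atBot (nhds 0)) ∧
  (∀ (z : ℝ) (i j : Fin m), Tendsto (fun ζ => k z ζ i j) atBot (nhds 0))

/-- A scattering function (with the `y`,`t` dependence suppressed): smooth, with all
partial derivatives bounded, integrable over `(-∞,0]` in each argument and decaying at `−∞`. -/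
def IsScattering {m : ℕ} (p : Ker m) : Prop :=
  (∀ i j : Fin m, ContDiff ℝ (⊤ : ℕ∞) (fun v : ℝ × ℝ => p v.1 v.2 i j)) ∧
  (∀ a b : ℕ, KernelDecay (pder a b p))

/-- Continuous on `(-∞,0]²`, bounded, and absolutely integrable in each argument. -/
def KernelNice {m : ℕ} (k : Ker m) : Prop :=
  (∀ i j : Fin m, ContinuousOn (fun v : ℝ × ℝ => k v.1 v.2 i j)
    (Set.Iic (0:ℝ) ×ˢ Set.Iic (0:ℝ))) ∧
  (∃ C, ∀ (z ζ : ℝ) (i j : Fin m), ‖k z ζ i j‖ ≤ C) ∧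
  (∀ (ζ : ℝ) (i j : Fin m), IntegrableOn (fun z => k z ζ i j) (Set.Iic (0:ℝ))) ∧
  (∀ (z : ℝ) (i j : Fin m), IntegrableOn (fun ζ => k z ζ i j) (Set.Iic (0:ℝ)))

/-- Entrywise iterated derivative in the parameter `x` of an `x`-family of kernels. -/
noncomputable def xder {m : ℕ} (n : ℕ) (w : ℝ → Ker m) : ℝ → Ker m :=
  fun x z ζ => Matrix.of fun i j => iteratedDeriv n (fun x' => w x' z ζ i j) x

/-- `w x` is the kernel of `V − id`, `V := (id − P)⁻¹`, with parameter `x`: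
a smooth family of kernels, whose partial derivatives are all bounded, integrable
and decaying, solving the resolvent equations `w = p^x + p^x∗w = p^x + w∗p^x`. -/
def IsResolventPlus {m : ℕ} (p : Ker m) (w : ℝ → Ker m) : Prop :=
  (∀ i j : Fin m, ContDiff ℝ (⊤ : ℕ∞) (fun v : ℝ × ℝ × ℝ => w v.1 v.2.1 v.2.2 i j)) ∧
  (∀ (n a b : ℕ) (x : ℝ), KernelDecay (pder a b (xder n w x))) ∧
  (∀ x, w x = pSh p x 0 0 + conv (pSh p x 0 0) (w x)) ∧
  (∀ x, w x = pSh p x 0 0 + conv (w x) (pSh p x 0 0))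

/-- `w x` is the kernel of `V† − id`, `V† := (id + P)⁻¹`, with parameter `x`:
it solves `w = −p^x − p^x∗w = −p^x − w∗p^x`. -/
def IsResolventMinus {m : ℕ} (p : Ker m) (w : ℝ → Ker m) : Prop :=
  (∀ i j : Fin m, ContDiff ℝ (⊤ : ℕ∞) (fun v : ℝ × ℝ × ℝ => w v.1 v.2.1 v.2.2 i j)) ∧
  (∀ (n a b : ℕ) (x : ℝ), KernelDecay (pder a b (xder n w x))) ∧
  (∀ x, w x = -(pSh p x 0 0) - conv (pSh p x 0 0) (w x)) ∧
  (∀ x, w x = -(pSh p x 0 0) - conv (w x) (pSh p x 0 0))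

/-- Kernel of the word `A·V'` where `V' = δ + v`. -/
noncomputable def aV {m : ℕ} (A v : Ker m) : Ker m := A + conv A v

/-- Kernel of the word `V·A` where `V = δ + u`. -/
noncomputable def vA {m : ℕ} (u A : Ker m) : Ker m := A + conv u A

/-- Kernel of the word `V A V'` where `V = δ+u`, `V' = δ+v`. -/
noncomputable def vAv {m : ℕ} (u A v : Ker m) : Ker m := vA u (aV A v)

/-- Kernel of the word `V A V' B V''` where `V = δ+u`, `V' = δ+v`, `V'' = δ+w'`. -/
noncomputable def vAvBv {m : ℕ} (u A v B w' : Ker m) : Ker m := vAv u (conv (aV A v) B) w'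

/-- Entrywise `∂_x` of an `x`-family of kernels. -/
noncomputable def dxK {m : ℕ} (E : ℝ → Ker m) (x : ℝ) : Ker m :=
  fun z ζ => Matrix.of fun i j => deriv (fun x' => E x' z ζ i j) x

end NCKP

namespace NCKP

/-- Matrix-valued functions `p = p(z,ζ;y,t)` on ℝ⁴. -/
abbrev Ker4 (m : ℕ) := ℝ → ℝ → ℝ → ℝ → Mat m

/-- `∂_z^a ∂_ζ^b` of a four-variable kernel, entrywise. -/
noncomputable def pder4 {m : ℕ} (a b : ℕ) (p : Ker4 m) : Ker4 m :=
  fun z ζ y t => Matrix.of fun i j =>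
    iteratedDeriv a (fun z' => iteratedDeriv b (fun ζ' => p z' ζ' y t i j) ζ) z

/-- A scattering function `p = p(z,ζ;y,t)`: smooth, with all its partial derivatives
bounded, absolutely integrable over `(-∞,0]` in each of the first two arguments, and
tending to `0` as either of the first two arguments tends to `−∞`. -/
def IsScattering4 {m : ℕ} (p : Ker4 m) : Prop :=
  (∀ i j : Fin m, ContDiff ℝ (⊤ : ℕ∞)
    (fun v : ℝ × ℝ × ℝ × ℝ => p v.1 v.2.1 v.2.2.1 v.2.2.2 i j)) ∧
  (∀ (a b : ℕ) (y t : ℝ), KernelDecay (fun z ζ => pder4 a b p z ζ y t))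

/-- The linearised KP constraints `∂_y p = ∂_z²p − ∂_ζ²p` and
`∂_t p = 4(∂_z³p + ∂_ζ³p)`, entrywise. -/
def LinearisedKP {m : ℕ} (p : Ker4 m) : Prop :=
  (∀ (z ζ y t : ℝ) (i j : Fin m),
    deriv (fun y' => p z ζ y' t i j) y
      = (pder4 2 0 p z ζ y t - pder4 0 2 p z ζ y t) i j) ∧
  (∀ (z ζ y t : ℝ) (i j : Fin m),
    deriv (fun t' => p z ζ y t' i j) t
      = (4:ℂ) * ((pder4 3 0 p z ζ y t + pder4 0 3 p z ζ y t) i j))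

/-- `∂_x^c ∂_y^d ∂_t^e` of a matrix-valued function of `(x,y,t)`, entrywise. -/
noncomputable def D3 {m : ℕ} (c d e : ℕ) (u : ℝ → ℝ → ℝ → Mat m) : ℝ → ℝ → ℝ → Mat m :=
  fun x y t => Matrix.of fun i j =>
    iteratedDeriv c (fun x' =>
      iteratedDeriv d (fun y' =>
        iteratedDeriv e (fun t' => u x' y' t' i j) t) y) x

/-- `∂_z^a ∂_ζ^b ∂_x^c ∂_y^d ∂_t^e` of a matrix function of `(z,ζ,x,y,t)`, entrywise. -/
noncomputable def D5 {m : ℕ} (a b c d e : ℕ)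
    (g : ℝ → ℝ → ℝ → ℝ → ℝ → Mat m) : ℝ → ℝ → ℝ → ℝ → ℝ → Mat m :=
  fun z ζ x y t => Matrix.of fun i j =>
    iteratedDeriv a (fun z' =>
      iteratedDeriv b (fun ζ' =>
        iteratedDeriv c (fun x' =>
          iteratedDeriv d (fun y' =>
            iteratedDeriv e (fun t' => g z' ζ' x' y' t' i j) t) y) x) ζ) z

/-- The kernel `p^x_{0,0}(z,ζ) = p(z+x,ζ+x;y,t)` at fixed parameters `x,y,t`. -/
noncomputable def pXK {m : ℕ} (p : Ker4 m) (x y t : ℝ) : Ker m :=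
  fun z ζ => p (z + x) (ζ + x) y t

/-- `w = w(z,ζ;x,y,t)` is the kernel of `V − id`, `V := (id − P)⁻¹`: a smooth family
of kernels, all of whose partial derivatives are bounded, integrable and decaying at
`−∞` in `z` and `ζ`, solving `w = p^x + p^x∗w = p^x + w∗p^x`. -/
def IsResolvent4Plus {m : ℕ} (p : Ker4 m) (w : ℝ → ℝ → ℝ → ℝ → ℝ → Mat m) : Prop :=
  (∀ i j : Fin m, ContDiff ℝ (⊤ : ℕ∞)
    (fun v : ℝ × ℝ × ℝ × ℝ × ℝ => w v.1 v.2.1 v.2.2.1 v.2.2.2.1 v.2.2.2.2 i j)) ∧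
  (∀ (a b c d e : ℕ) (x y t : ℝ), KernelDecay (fun z ζ => D5 a b c d e w z ζ x y t)) ∧
  (∀ x y t : ℝ, (fun z ζ => w z ζ x y t)
      = pXK p x y t + conv (pXK p x y t) (fun z ζ => w z ζ x y t)) ∧
  (∀ x y t : ℝ, (fun z ζ => w z ζ x y t)
      = pXK p x y t + conv (fun z ζ => w z ζ x y t) (pXK p x y t))

/-- `w = w(z,ζ;x,y,t)` is the kernel of `V† − id`, `V† := (id + P)⁻¹`:
it solves `w = −p^x − p^x∗w = −p^x − w∗p^x`. -/
def IsResolvent4Minus {m : ℕ} (p : Ker4 m) (w : ℝ → ℝ → ℝ → ℝ → ℝ → Mat m) : Prop :=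
  (∀ i j : Fin m, ContDiff ℝ (⊤ : ℕ∞)
    (fun v : ℝ × ℝ × ℝ × ℝ × ℝ => w v.1 v.2.1 v.2.2.1 v.2.2.2.1 v.2.2.2.2 i j)) ∧
  (∀ (a b c d e : ℕ) (x y t : ℝ), KernelDecay (fun z ζ => D5 a b c d e w z ζ x y t)) ∧
  (∀ x y t : ℝ, (fun z ζ => w z ζ x y t)
      = -(pXK p x y t) - conv (pXK p x y t) (fun z ζ => w z ζ x y t)) ∧
  (∀ x y t : ℝ, (fun z ζ => w z ζ x y t)
      = -(pXK p x y t) - conv (fun z ζ => w z ζ x y t) (pXK p x y t))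

/-- The kernel `q^x := p^x_{1,0} − p^x_{0,1}` at fixed parameters `x,y,t`. -/
noncomputable def qXK {m : ℕ} (p : Ker4 m) (x y t : ℝ) : Ker m :=
  fun z ζ => pder4 1 0 p (z + x) (ζ + x) y t - pder4 0 1 p (z + x) (ζ + x) y t

/-- `K₊ := q^x + w₊∗q^x + q^x∗w₋ + w₊∗q^x∗w₋`, the kernel of `V P_{[1,0]} V†`. -/
noncomputable def Kplus {m : ℕ} (p : Ker4 m) (wp wm : ℝ → ℝ → ℝ → ℝ → ℝ → Mat m)
    (x y t : ℝ) : Ker m :=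
  qXK p x y t + conv (fun z ζ => wp z ζ x y t) (qXK p x y t)
    + conv (qXK p x y t) (fun z ζ => wm z ζ x y t)
    + conv (fun z ζ => wp z ζ x y t) (conv (qXK p x y t) (fun z ζ => wm z ζ x y t))

/-- `K₋ := q^x + w₋∗q^x + q^x∗w₊ + w₋∗q^x∗w₊`, the kernel of `V† P_{[1,0]} V`. -/
noncomputable def Kminus {m : ℕ} (p : Ker4 m) (wp wm : ℝ → ℝ → ℝ → ℝ → ℝ → Mat m)
    (x y t : ℝ) : Ker m :=
  qXK p x y t + conv (fun z ζ => wm z ζ x y t) (qXK p x y t)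
    + conv (qXK p x y t) (fun z ζ => wp z ζ x y t)
    + conv (fun z ζ => wm z ζ x y t) (conv (qXK p x y t) (fun z ζ => wp z ζ x y t))

end NCKP

namespace NCKP

/-!
Write `V = (id - P)⁻¹`, `V† = (id + P)⁻¹` and `∂` for differentiation of functions on a half-line.
Conjugating the commutator `[∂, P]` by resolvents gives the commutators of `∂` with them, but
integration by parts on `(-∞, 0]` leaves the boundary term `w₋(z, 0) w₊(0, ζ)` in `V† q V`; this
yields closed forms for `K₊` and `K₋`. Moving the half-line to `(-∞, x]` turns `p^x` into the fixed
kernel `p`, and the resolvent identity for two half-lines shows that `∂ₓ w₊` equals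
`(∂_z + ∂_ζ) w₊` plus the boundary term `w₊(z, 0) w₊(0, ζ)`, and likewise for `w₋`. Adding these
formulas, everything but `2 ∂ₓ w₊` cancels. The argument takes place in an arbitrary real Banach
algebra; matrices enter through the operator norm, for which entrywise regularity suffices.
-/

section NormedSpaceValued

variable {F : Type*}

/-- The kernel `k` conjugated by the translation by `x`: the paper's `k^x`. -/
def translate (x : ℝ) (k : ℝ → ℝ → F) : ℝ → ℝ → F :=
  fun z ζ => k (z + x) (ζ + x)

lemma translate_translate_neg (x : ℝ) (k : ℝ → ℝ → F) : translate x (translate (-x) k) = k := by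
  ext z ζ
  simp only [translate, add_neg_cancel_right]

lemma translate_injective (x : ℝ) : (translate (F := F) x).Injective :=
  Function.LeftInverse.injective (g := translate (-x)) fun k => by
    simpa only [neg_neg] using translate_translate_neg (-x) k

variable [NormedAddCommGroup F]

lemma integrableOn_Iic_comp_add_right_iff {f : ℝ → F} {c x : ℝ} :
    IntegrableOn (fun ξ => f (ξ + x)) (Set.Iic c) ↔ IntegrableOn f (Set.Iic (c + x)) := by
  simpa [Function.comp_def] using (measurePreserving_add_right volume x).integrableOn_comp_preimage
    (MeasurableEquiv.addRight x).measurableEmbedding (f := f) (s := Set.Iic (c + x))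

/-- Bounded continuous kernels: a kernel of this kind can be integrated against integrable
functions in either argument, with respect to any measures. -/
structure IsBoundedKernel (k : ℝ → ℝ → F) : Prop where
  continuous : Continuous fun v : ℝ × ℝ => k v.1 v.2
  bounded : ∃ C, ∀ z ζ, ‖k z ζ‖ ≤ C

namespace IsBoundedKernel

variable {Q Q' : ℝ → ℝ → F}

lemma neg (hQ : IsBoundedKernel Q) : IsBoundedKernel (-Q) where
  continuous := hQ.continuous.neg
  bounded := hQ.bounded.imp fun _ hC z ζ => (norm_neg (Q z ζ)).trans_le (hC z ζ)

lemma sub (hQ : IsBoundedKernel Q) (hQ' : IsBoundedKernel Q') : IsBoundedKernel (Q - Q') where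
  continuous := hQ.continuous.sub hQ'.continuous
  bounded := by
    obtain ⟨C, hC⟩ := hQ.bounded
    obtain ⟨C', hC'⟩ := hQ'.bounded
    exact ⟨C + C', fun z ζ => norm_sub_le_of_le (hC z ζ) (hC' z ζ)⟩

end IsBoundedKernel

variable [NormedSpace ℝ F]

/-- The partial derivative `∂k/∂z` of a kernel `k = k(z, ζ)`. -/
noncomputable def derivFst (k : ℝ → ℝ → F) : ℝ → ℝ → F :=
  fun z ζ => deriv (k · ζ) z

/-- The partial derivative `∂k/∂ζ` of a kernel `k = k(z, ζ)`. -/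
noncomputable def derivSnd (k : ℝ → ℝ → F) : ℝ → ℝ → F :=
  fun z ζ => deriv (k z) ζ

lemma derivFst_neg (k : ℝ → ℝ → F) : derivFst (-k) = -derivFst k :=
  funext₂ fun _ ζ => deriv.neg (f := (k · ζ))

lemma derivSnd_neg (k : ℝ → ℝ → F) : derivSnd (-k) = -derivSnd k :=
  funext₂ fun z _ => deriv.neg (f := k z)

lemma derivFst_translate (x : ℝ) (k : ℝ → ℝ → F) :
    derivFst (translate x k) = translate x (derivFst k) :=
  funext₂ fun z ζ => deriv_comp_add_const (k · (ζ + x)) x z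

lemma derivSnd_translate (x : ℝ) (k : ℝ → ℝ → F) :
    derivSnd (translate x k) = translate x (derivSnd k) :=
  funext₂ fun z ζ => deriv_comp_add_const (k (z + x)) x ζ

lemma translate_derivFst_sub_derivSnd (x : ℝ) (k : ℝ → ℝ → F) :
    translate x (derivFst k - derivSnd k) =
      derivFst (translate x k) - derivSnd (translate x k) := by
  rw [derivFst_translate, derivSnd_translate]
  rfl

/-- Continuously differentiable kernels that are bounded together with their first partial
derivatives; convolutions against them can be differentiated under the integral sign. -/
structure IsBoundedC1Kernel (P : ℝ → ℝ → F) : Prop where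
  contDiff : ContDiff ℝ 1 fun v : ℝ × ℝ => P v.1 v.2
  bounded : ∃ C, ∀ z ζ, ‖P z ζ‖ ≤ C
  bounded_derivFst : ∃ C, ∀ z ζ, ‖derivFst P z ζ‖ ≤ C
  bounded_derivSnd : ∃ C, ∀ z ζ, ‖derivSnd P z ζ‖ ≤ C

namespace IsBoundedC1Kernel

variable {P : ℝ → ℝ → F}

lemma hasDerivAt_fst (hP : IsBoundedC1Kernel P) (z ζ : ℝ) :
    HasDerivAt (P · ζ) (derivFst P z ζ) z :=
  ((hP.contDiff.comp (contDiff_prodMk_left ζ)).differentiable one_ne_zero z).hasDerivAt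

lemma hasDerivAt_snd (hP : IsBoundedC1Kernel P) (z ζ : ℝ) :
    HasDerivAt (P z) (derivSnd P z ζ) ζ :=
  ((hP.contDiff.comp (contDiff_prodMk_right z)).differentiable one_ne_zero ζ).hasDerivAt

lemma derivFst_eq_fderiv (hP : IsBoundedC1Kernel P) (v : ℝ × ℝ) :
    derivFst P v.1 v.2 = fderiv ℝ (fun u : ℝ × ℝ => P u.1 u.2) v (1, 0) := by
  have hfderiv := (hP.contDiff.differentiable one_ne_zero v).hasFDerivAt
  exact (hfderiv.comp_hasDerivAt v.1 ((hasDerivAt_id v.1).prodMk (hasDerivAt_const v.1 v.2))).deriv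

lemma derivSnd_eq_fderiv (hP : IsBoundedC1Kernel P) (v : ℝ × ℝ) :
    derivSnd P v.1 v.2 = fderiv ℝ (fun u : ℝ × ℝ => P u.1 u.2) v (0, 1) := by
  have hfderiv := (hP.contDiff.differentiable one_ne_zero v).hasFDerivAt
  exact (hfderiv.comp_hasDerivAt v.2 ((hasDerivAt_const v.2 v.1).prodMk (hasDerivAt_id v.2))).deriv

lemma isBoundedKernel (hP : IsBoundedC1Kernel P) : IsBoundedKernel P :=
  ⟨hP.contDiff.continuous, hP.bounded⟩

lemma isBoundedKernel_derivFst (hP : IsBoundedC1Kernel P) : IsBoundedKernel (derivFst P) where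
  continuous := by
    simp_rw [hP.derivFst_eq_fderiv]
    exact (hP.contDiff.continuous_fderiv one_ne_zero).clm_apply continuous_const
  bounded := hP.bounded_derivFst

lemma isBoundedKernel_derivSnd (hP : IsBoundedC1Kernel P) : IsBoundedKernel (derivSnd P) where
  continuous := by
    simp_rw [hP.derivSnd_eq_fderiv]
    exact (hP.contDiff.continuous_fderiv one_ne_zero).clm_apply continuous_const
  bounded := hP.bounded_derivSnd

lemma neg (hP : IsBoundedC1Kernel P) : IsBoundedC1Kernel (-P) where
  contDiff := hP.contDiff.neg
  bounded := hP.isBoundedKernel.neg.bounded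
  bounded_derivFst := derivFst_neg P ▸ hP.isBoundedKernel_derivFst.neg.bounded
  bounded_derivSnd := derivSnd_neg P ▸ hP.isBoundedKernel_derivSnd.neg.bounded

lemma translate (hP : IsBoundedC1Kernel P) (x : ℝ) : IsBoundedC1Kernel (translate x P) where
  contDiff := hP.contDiff.comp
    ((contDiff_fst.add contDiff_const).prodMk (contDiff_snd.add contDiff_const))
  bounded := hP.bounded.imp fun _ hC _ _ => hC _ _
  bounded_derivFst := by
    simpa only [derivFst_translate] using hP.bounded_derivFst.imp fun _ hC _ _ => hC _ _
  bounded_derivSnd := by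
    simpa only [derivSnd_translate] using hP.bounded_derivSnd.imp fun _ hC _ _ => hC _ _

end IsBoundedC1Kernel

lemma hasDerivAt_sub_diagonal {w : ℝ → ℝ → ℝ → F} {x z ζ : ℝ}
    (hw : DifferentiableAt ℝ (fun v : ℝ × ℝ × ℝ => w v.1 v.2.1 v.2.2) (x, z, ζ)) :
    HasDerivAt (fun s => w s (z + x - s) (ζ + x - s))
      (deriv (w · z ζ) x - derivFst (w x) z ζ - derivSnd (w x) z ζ) x := by
  set L := fderiv ℝ (fun v : ℝ × ℝ × ℝ => w v.1 v.2.1 v.2.2) (x, z, ζ)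
  have hcomp (γ : ℝ → ℝ × ℝ × ℝ) {γ' : ℝ × ℝ × ℝ} {s : ℝ} (hγ : HasDerivAt γ γ' s)
      (hs : (x, z, ζ) = γ s) : HasDerivAt (fun s => w (γ s).1 (γ s).2.1 (γ s).2.2) (L γ') s :=
    hw.hasFDerivAt.comp_hasDerivAt_of_eq s hγ hs
  have hx : deriv (w · z ζ) x = L (1, 0, 0) :=
    (hcomp (·, z, ζ) ((hasDerivAt_id x).prodMk (hasDerivAt_const x (z, ζ))) rfl).deriv
  have hz : derivFst (w x) z ζ = L (0, 1, 0) :=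
    (hcomp (x, ·, ζ) ((hasDerivAt_const z x).prodMk
      ((hasDerivAt_id z).prodMk (hasDerivAt_const z ζ))) rfl).deriv
  have hζ : derivSnd (w x) z ζ = L (0, 0, 1) :=
    (hcomp (x, z, ·) ((hasDerivAt_const ζ x).prodMk
      ((hasDerivAt_const ζ z).prodMk (hasDerivAt_id ζ))) rfl).deriv
  have hL : L (1, 0, 0) - L (0, 1, 0) - L (0, 0, 1) = L (1, -1, -1) := by
    simp only [← map_sub, Prod.mk_sub_mk, sub_zero, zero_sub]
  rw [hx, hz, hζ, hL]
  exact hcomp (fun s => (s, z + x - s, ζ + x - s))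
    ((hasDerivAt_id x).prodMk
      (((hasDerivAt_id x).const_sub (z + x)).prodMk ((hasDerivAt_id x).const_sub (ζ + x))))
    (by simp only [add_sub_cancel_right])

lemma hasDerivAt_of_sub_eq_intervalIntegral [CompleteSpace F] {f : ℝ → F} {G : ℝ → ℝ → F}
    {x : ℝ} (hG : Continuous fun v : ℝ × ℝ => G v.1 v.2)
    (hf : ∀ y, f y - f x = ∫ ξ in x..y, G y ξ) : HasDerivAt f (G x x) x := by
  rw [hasDerivAt_iff_isLittleO, Asymptotics.isLittleO_iff]
  intro ε hε
  obtain ⟨δ, hδ, hclose⟩ := Metric.continuousAt_iff.mp (hG.continuousAt (x := (x, x))) ε hε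
  filter_upwards [Metric.ball_mem_nhds x hδ] with y hy
  have hGy : IntervalIntegrable (G y) volume x y :=
    (hG.comp (.prodMk_right y)).intervalIntegrable x y
  have hbound : ∀ ξ ∈ Set.uIoc x y, ‖G y ξ - G x x‖ ≤ ε := fun ξ hξ => by
    have hdist : dist (y, ξ) (x, x) < δ :=
      max_lt hy ((Set.abs_sub_left_of_mem_uIcc (Set.uIoc_subset_uIcc hξ)).trans_lt hy)
    simpa only [dist_eq_norm] using (hclose hdist).le
  calc ‖f y - f x - (y - x) • G x x‖ = ‖∫ ξ in x..y, (G y ξ - G x x)‖ := by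
        rw [intervalIntegral.integral_sub hGy intervalIntegrable_const,
          intervalIntegral.integral_const, hf]
    _ ≤ ε * |y - x| := intervalIntegral.norm_integral_le_of_norm_le_const hbound

end NormedSpaceValued

section AlgebraValued

variable {E : Type*} [NormedRing E]

namespace IsBoundedKernel

variable {Q : ℝ → ℝ → E} {μ ν : Measure ℝ} {a b : ℝ → E}

lemma integrable_mul_left (hQ : IsBoundedKernel Q) (hb : Integrable b ν) (z : ℝ) :
    Integrable (fun η => Q z η * b η) ν := by
  obtain ⟨C, hC⟩ := hQ.bounded
  exact hb.bdd_mul (hQ.continuous.comp (.prodMk_right z)).aestronglyMeasurable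
    (ae_of_all _ (hC z))

lemma integrable_mul_right (hQ : IsBoundedKernel Q) (ha : Integrable a μ) (ζ : ℝ) :
    Integrable (fun ξ => a ξ * Q ξ ζ) μ := by
  obtain ⟨C, hC⟩ := hQ.bounded
  exact ha.mul_bdd (hQ.continuous.comp (.prodMk_left ζ)).aestronglyMeasurable
    (ae_of_all _ (hC · ζ))

lemma integrable_mul_mul [SFinite μ] [SFinite ν] (hQ : IsBoundedKernel Q)
    (ha : Integrable a μ) (hb : Integrable b ν) :
    Integrable (fun v : ℝ × ℝ => a v.1 * Q v.1 v.2 * b v.2) (μ.prod ν) := by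
  obtain ⟨C, hC⟩ := hQ.bounded
  have hmeas : AEStronglyMeasurable (fun v : ℝ × ℝ => a v.1 * Q v.1 v.2 * b v.2) (μ.prod ν) :=
    (ha.aestronglyMeasurable.comp_fst.mul hQ.continuous.aestronglyMeasurable).mul
      hb.aestronglyMeasurable.comp_snd
  refine ((ha.norm.mul_prod hb.norm).const_mul C).mono' hmeas (ae_of_all _ fun v => ?_)
  calc ‖a v.1 * Q v.1 v.2 * b v.2‖ ≤ ‖a v.1‖ * ‖Q v.1 v.2‖ * ‖b v.2‖ := norm_mul₃_le
    _ ≤ ‖a v.1‖ * C * ‖b v.2‖ := by gcongr; exact hC _ _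
    _ = C * (‖a v.1‖ * ‖b v.2‖) := by ring

variable [NormedAlgebra ℝ E]

lemma integral_mul_mul_left (hQ : IsBoundedKernel Q) (hb : Integrable b ν) (c : E) (z : ℝ) :
    ∫ η, c * Q z η * b η ∂ν = c * ∫ η, Q z η * b η ∂ν := by
  simp_rw [mul_assoc, integral_const_mul_of_integrable (hQ.integrable_mul_left hb z)]

lemma integral_mul_mul_right (hQ : IsBoundedKernel Q) (ha : Integrable a μ) (c : E) (ζ : ℝ) :
    ∫ ξ, a ξ * Q ξ ζ * c ∂μ = (∫ ξ, a ξ * Q ξ ζ ∂μ) * c :=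
  integral_mul_const_of_integrable (hQ.integrable_mul_right ha ζ)

variable [SFinite μ] [SFinite ν]

lemma integrable_mul_integral (hQ : IsBoundedKernel Q) (ha : Integrable a μ)
    (hb : Integrable b ν) : Integrable (fun ξ => a ξ * ∫ η, Q ξ η * b η ∂ν) μ := by
  simpa only [hQ.integral_mul_mul_left hb] using
    (hQ.integrable_mul_mul ha hb).integral_prod_left

lemma integrable_integral_mul (hQ : IsBoundedKernel Q) (ha : Integrable a μ)
    (hb : Integrable b ν) : Integrable (fun η => (∫ ξ, a ξ * Q ξ η ∂μ) * b η) ν := by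
  simpa only [hQ.integral_mul_mul_right ha] using
    (hQ.integrable_mul_mul ha hb).integral_prod_right

lemma integral_mul_integral_comm (hQ : IsBoundedKernel Q) (ha : Integrable a μ)
    (hb : Integrable b ν) :
    ∫ ξ, a ξ * ∫ η, Q ξ η * b η ∂ν ∂μ = ∫ η, (∫ ξ, a ξ * Q ξ η ∂μ) * b η ∂ν := by
  simp_rw [← hQ.integral_mul_mul_left hb, ← hQ.integral_mul_mul_right ha]
  exact integral_integral_swap (hQ.integrable_mul_mul ha hb)

lemma integrable_mul_add_integral (hQ : IsBoundedKernel Q) (ha : Integrable a μ)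
    (hb : Integrable b ν) (ζ : ℝ) :
    Integrable (fun ξ => a ξ * (Q ξ ζ + ∫ η, Q ξ η * b η ∂ν)) μ := by
  simpa only [mul_add] using
    (hQ.integrable_mul_right ha ζ).fun_add (hQ.integrable_mul_integral ha hb)

lemma integrable_add_integral_mul (hQ : IsBoundedKernel Q) (ha : Integrable a μ)
    (hb : Integrable b ν) (z : ℝ) :
    Integrable (fun η => (Q z η + ∫ ξ, a ξ * Q ξ η ∂μ) * b η) ν := by
  simpa only [add_mul] using
    (hQ.integrable_mul_left hb z).fun_add (hQ.integrable_integral_mul ha hb)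

lemma integral_mul_add_integral (hQ : IsBoundedKernel Q) (ha : Integrable a μ)
    (hb : Integrable b ν) (ζ : ℝ) :
    ∫ ξ, a ξ * (Q ξ ζ + ∫ η, Q ξ η * b η ∂ν) ∂μ =
      ∫ ξ, a ξ * Q ξ ζ ∂μ + ∫ ξ, a ξ * ∫ η, Q ξ η * b η ∂ν ∂μ := by
  simp_rw [mul_add]
  exact integral_add (hQ.integrable_mul_right ha ζ) (hQ.integrable_mul_integral ha hb)

lemma integral_add_integral_mul (hQ : IsBoundedKernel Q) (ha : Integrable a μ)
    (hb : Integrable b ν) (z : ℝ) :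
    ∫ η, (Q z η + ∫ ξ, a ξ * Q ξ η ∂μ) * b η ∂ν =
      ∫ η, Q z η * b η ∂ν + ∫ η, (∫ ξ, a ξ * Q ξ η ∂μ) * b η ∂ν := by
  simp_rw [add_mul]
  exact integral_add (hQ.integrable_mul_left hb z) (hQ.integrable_integral_mul ha hb)

lemma add_integral_mul_comm (hQ : IsBoundedKernel Q) (ha : Integrable a μ)
    (hb : Integrable b ν) (z ζ : ℝ) :
    (Q z ζ + ∫ η, Q z η * b η ∂ν) + ∫ ξ, a ξ * (Q ξ ζ + ∫ η, Q ξ η * b η ∂ν) ∂μ =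
      (Q z ζ + ∫ ξ, a ξ * Q ξ ζ ∂μ) + ∫ η, (Q z η + ∫ ξ, a ξ * Q ξ η ∂μ) * b η ∂ν := by
  rw [hQ.integral_mul_add_integral ha hb, hQ.integral_add_integral_mul ha hb,
    hQ.integral_mul_integral_comm ha hb]
  abel

end IsBoundedKernel

variable [NormedAlgebra ℝ E]

namespace IsBoundedC1Kernel

variable {P : ℝ → ℝ → E} {μ ν : Measure ℝ} {a b : ℝ → E}

lemma hasDerivAt_integral_mul (hP : IsBoundedC1Kernel P) (hb : Integrable b ν) (z : ℝ) :
    HasDerivAt (fun z' => ∫ η, P z' η * b η ∂ν) (∫ η, derivFst P z η * b η ∂ν) z := by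
  obtain ⟨C, hC⟩ := hP.bounded_derivFst
  have hint := hP.isBoundedKernel.integrable_mul_left hb
  have hint' := hP.isBoundedKernel_derivFst.integrable_mul_left hb
  refine (hasDerivAt_integral_of_dominated_loc_of_deriv_le (F := fun z' η => P z' η * b η)
    (F' := fun z' η => derivFst P z' η * b η) (bound := fun η => C * ‖b η‖) univ_mem
    (.of_forall fun z' => (hint z').aestronglyMeasurable) (hint z)
    (hint' z).aestronglyMeasurable (ae_of_all _ fun η z' _ => ?_)
    (hb.norm.const_mul C) (ae_of_all _ fun η z' _ => ?_)).2
  · exact norm_mul_le_of_le (hC z' η) le_rfl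
  · exact (hP.hasDerivAt_fst z' η).mul_const (b η)

lemma hasDerivAt_mul_integral (hP : IsBoundedC1Kernel P) (ha : Integrable a μ) (ζ : ℝ) :
    HasDerivAt (fun ζ' => ∫ ξ, a ξ * P ξ ζ' ∂μ) (∫ ξ, a ξ * derivSnd P ξ ζ ∂μ) ζ := by
  obtain ⟨C, hC⟩ := hP.bounded_derivSnd
  have hint := hP.isBoundedKernel.integrable_mul_right ha
  have hint' := hP.isBoundedKernel_derivSnd.integrable_mul_right ha
  refine (hasDerivAt_integral_of_dominated_loc_of_deriv_le (F := fun ζ' ξ => a ξ * P ξ ζ')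
    (F' := fun ζ' ξ => a ξ * derivSnd P ξ ζ') (bound := fun ξ => ‖a ξ‖ * C) univ_mem
    (.of_forall fun ζ' => (hint ζ').aestronglyMeasurable) (hint ζ)
    (hint' ζ).aestronglyMeasurable (ae_of_all _ fun ξ ζ' _ => ?_)
    (ha.norm.mul_const C) (ae_of_all _ fun ξ ζ' _ => ?_)).2
  · exact norm_mul_le_of_le le_rfl (hC ξ ζ')
  · exact (hP.hasDerivAt_snd ξ ζ').const_mul (a ξ)

end IsBoundedC1Kernel

/-- The kernel of the product of two integral operators on the half-line `(-∞, c]`. -/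
noncomputable def kernelMul (c : ℝ) (k₁ k₂ : ℝ → ℝ → E) : ℝ → ℝ → E :=
  fun z ζ => ∫ ξ in Set.Iic c, k₁ z ξ * k₂ ξ ζ

/-- The kernel of `(id + U) Q (id + V)`, for integral operators on `(-∞, c]` with kernels
`U`, `Q`, `V`. -/
noncomputable def sandwich (c : ℝ) (U Q V : ℝ → ℝ → E) : ℝ → ℝ → E :=
  Q + kernelMul c U Q + kernelMul c Q V + kernelMul c U (kernelMul c Q V)

lemma kernelMul_translate (c x : ℝ) (k₁ k₂ : ℝ → ℝ → E) :
    kernelMul c (translate x k₁) (translate x k₂) = translate x (kernelMul (c + x) k₁ k₂) := by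
  ext z ζ
  simpa [kernelMul, translate] using (measurePreserving_add_right volume x).setIntegral_preimage_emb
    (MeasurableEquiv.addRight x).measurableEmbedding
    (fun ξ => k₁ (z + x) ξ * k₂ ξ (ζ + x)) (Set.Iic (c + x))

section Sandwich

variable {c z ζ : ℝ} {U Q Q' V : ℝ → ℝ → E}

lemma sandwich_eq_left (hQ : IsBoundedKernel Q) (hU : IntegrableOn (U z) (Set.Iic c))
    (hV : IntegrableOn (V · ζ) (Set.Iic c)) :
    sandwich c U Q V z ζ =
      (Q + kernelMul c Q V) z ζ + kernelMul c U (Q + kernelMul c Q V) z ζ := by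
  simp only [sandwich, kernelMul, Pi.add_apply, hQ.integral_mul_add_integral hU hV]
  abel

lemma sandwich_eq_right (hQ : IsBoundedKernel Q) (hU : IntegrableOn (U z) (Set.Iic c))
    (hV : IntegrableOn (V · ζ) (Set.Iic c)) :
    sandwich c U Q V z ζ =
      (Q + kernelMul c U Q) z ζ + kernelMul c (Q + kernelMul c U Q) V z ζ := by
  simp only [sandwich, kernelMul, Pi.add_apply, hQ.integral_add_integral_mul hU hV,
    hQ.integral_mul_integral_comm hU hV]
  abel

lemma kernelMul_add_left (hQ : IsBoundedKernel Q) (hQ' : IsBoundedKernel Q')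
    (hV : IntegrableOn (V · ζ) (Set.Iic c)) :
    kernelMul c (Q + Q') V z ζ = kernelMul c Q V z ζ + kernelMul c Q' V z ζ := by
  simp only [kernelMul, Pi.add_apply, add_mul]
  exact integral_add (hQ.integrable_mul_left hV z) (hQ'.integrable_mul_left hV z)

lemma sandwich_add (hQ : IsBoundedKernel Q) (hQ' : IsBoundedKernel Q')
    (hU : IntegrableOn (U z) (Set.Iic c)) (hV : IntegrableOn (V · ζ) (Set.Iic c)) :
    sandwich c U (Q + Q') V z ζ = sandwich c U Q V z ζ + sandwich c U Q' V z ζ := by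
  have hUQ : kernelMul c U (Q + Q') z ζ = kernelMul c U Q z ζ + kernelMul c U Q' z ζ := by
    simp only [kernelMul, Pi.add_apply, mul_add]
    exact integral_add (hQ.integrable_mul_right hU ζ) (hQ'.integrable_mul_right hU ζ)
  have hUQV : kernelMul c U (kernelMul c (Q + Q') V) z ζ =
      kernelMul c U (kernelMul c Q V) z ζ + kernelMul c U (kernelMul c Q' V) z ζ := by
    rw [kernelMul]
    simp_rw [kernelMul_add_left hQ hQ' hV, mul_add]
    exact integral_add (hQ.integrable_mul_integral hU hV) (hQ'.integrable_mul_integral hU hV)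
  simp only [sandwich, Pi.add_apply, hUQ, kernelMul_add_left hQ hQ' hV, hUQV]
  abel

lemma sandwich_neg : sandwich c U (-Q) V = -sandwich c U Q V := by
  ext z ζ
  simp only [sandwich, kernelMul, Pi.add_apply, Pi.neg_apply, neg_mul, mul_neg, integral_neg]
  abel

end Sandwich

/-- `W` is a resolvent kernel for `P` on the half-line `(-∞, c]`: the kernel of
`(id - P)⁻¹ - id`. The kernel of `(id + P)⁻¹ - id` is a resolvent kernel for `-P`. -/
structure IsResolventKernel (c : ℝ) (P W : ℝ → ℝ → E) : Prop where
  integrable_fst : ∀ ζ, IntegrableOn (W · ζ) (Set.Iic c)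
  integrable_snd : ∀ z, IntegrableOn (W z) (Set.Iic c)
  eq_left : W = P + kernelMul c P W
  eq_right : W = P + kernelMul c W P

namespace IsResolventKernel

variable {c c' : ℝ} {P U V W W' : ℝ → ℝ → E}

lemma hasDerivAt_fst (hW : IsResolventKernel c P W) (hP : IsBoundedC1Kernel P) (z ζ : ℝ) :
    HasDerivAt (W · ζ) ((derivFst P + kernelMul c (derivFst P) W) z ζ) z :=
  ((hP.hasDerivAt_fst z ζ).fun_add
    (hP.hasDerivAt_integral_mul (hW.integrable_fst ζ) z)).congr_of_eventuallyEq
    (.of_forall fun z' => congr_fun₂ hW.eq_left z' ζ)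

lemma hasDerivAt_snd (hW : IsResolventKernel c P W) (hP : IsBoundedC1Kernel P) (z ζ : ℝ) :
    HasDerivAt (W z) ((derivSnd P + kernelMul c W (derivSnd P)) z ζ) ζ :=
  ((hP.hasDerivAt_snd z ζ).fun_add
    (hP.hasDerivAt_mul_integral (hW.integrable_snd z) ζ)).congr_of_eventuallyEq
    (.of_forall fun ζ' => congr_fun₂ hW.eq_right z ζ')

lemma derivFst_eq (hW : IsResolventKernel c P W) (hP : IsBoundedC1Kernel P) :
    derivFst W = derivFst P + kernelMul c (derivFst P) W :=
  funext₂ fun z ζ => (hW.hasDerivAt_fst hP z ζ).deriv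

lemma derivSnd_eq (hW : IsResolventKernel c P W) (hP : IsBoundedC1Kernel P) :
    derivSnd W = derivSnd P + kernelMul c W (derivSnd P) :=
  funext₂ fun z ζ => (hW.hasDerivAt_snd hP z ζ).deriv

lemma integrableOn_mul_right (hW : IsResolventKernel c P W) (hP : IsBoundedKernel P) {a : ℝ → E}
    (ha : IntegrableOn a (Set.Iic c')) (ζ : ℝ) :
    IntegrableOn (fun ξ => a ξ * W ξ ζ) (Set.Iic c') := by
  rw [hW.eq_left]
  exact hP.integrable_mul_add_integral ha (hW.integrable_fst ζ) ζ

lemma integrableOn_mul_left (hW : IsResolventKernel c P W) (hP : IsBoundedKernel P) {b : ℝ → E}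
    (hb : IntegrableOn b (Set.Iic c')) (z : ℝ) :
    IntegrableOn (fun ξ => W z ξ * b ξ) (Set.Iic c') := by
  rw [hW.eq_right]
  exact hP.integrable_add_integral_mul (hW.integrable_snd z) hb z

lemma resolvent_identity (hW : IsResolventKernel c P W) (hW' : IsResolventKernel c' P W')
    (hP : IsBoundedKernel P) (z ζ : ℝ) :
    W' z ζ - W z ζ = ∫ ξ in c..c', W' z ξ * W ξ ζ := by
  have hcomm : W z ζ + ∫ ξ in Set.Iic c', W' z ξ * W ξ ζ =
      W' z ζ + ∫ ξ in Set.Iic c, W' z ξ * W ξ ζ := by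
    have h := hP.add_integral_mul_comm (hW'.integrable_snd z) (hW.integrable_fst ζ) z ζ
    have hleft (ξ : ℝ) : P ξ ζ + ∫ η in Set.Iic c, P ξ η * W η ζ = W ξ ζ :=
      (congr_fun₂ hW.eq_left ξ ζ).symm
    have hright (η : ℝ) : P z η + ∫ ξ in Set.Iic c', W' z ξ * P ξ η = W' z η :=
      (congr_fun₂ hW'.eq_right z η).symm
    simpa only [hleft, hright] using h
  rw [← intervalIntegral.integral_Iic_sub_Iic
      (hW'.integrableOn_mul_left hP (hW.integrable_fst ζ) z)
      (hW.integrableOn_mul_right hP (hW'.integrable_snd z) ζ)]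
  rw [sub_eq_sub_iff_add_eq_add, ← hcomm, add_comm]

lemma untranslate {x : ℝ} (hW : IsResolventKernel c (translate x P) W) :
    IsResolventKernel (c + x) P (translate (-x) W) := by
  have hintegrable {f : ℝ → E} (hf : IntegrableOn f (Set.Iic c)) :
      IntegrableOn (fun ξ => f (ξ + -x)) (Set.Iic (c + x)) :=
    integrableOn_Iic_comp_add_right_iff.mpr (by rwa [add_neg_cancel_right])
  have hleft := hW.eq_left
  have hright := hW.eq_right
  rw [← translate_translate_neg x W, kernelMul_translate] at hleft hright
  exact ⟨fun ζ => hintegrable (hW.integrable_fst (ζ + -x)),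
    fun z => hintegrable (hW.integrable_snd (z + -x)),
    translate_injective x hleft, translate_injective x hright⟩

lemma sandwich_derivFst (hV : IsResolventKernel c P V) (hP : IsBoundedC1Kernel P) {z : ℝ}
    (hU : IntegrableOn (U z) (Set.Iic c)) (ζ : ℝ) :
    sandwich c U (derivFst P) V z ζ = derivFst V z ζ + kernelMul c U (derivFst V) z ζ := by
  rw [hV.derivFst_eq hP,
    sandwich_eq_left hP.isBoundedKernel_derivFst hU (hV.integrable_fst ζ)]

lemma sandwich_derivSnd (hU : IsResolventKernel c P U) (hP : IsBoundedC1Kernel P) {ζ : ℝ}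
    (hV : IntegrableOn (V · ζ) (Set.Iic c)) (z : ℝ) :
    sandwich c U (derivSnd P) V z ζ = derivSnd U z ζ + kernelMul c (derivSnd U) V z ζ := by
  rw [hU.derivSnd_eq hP,
    sandwich_eq_right hP.isBoundedKernel_derivSnd (hU.integrable_snd z) hV]

variable [CompleteSpace E]

lemma kernelMul_derivFst_add_kernelMul_derivSnd {P' : ℝ → ℝ → E}
    (hU : IsResolventKernel c P U) (hV : IsResolventKernel c P' V)
    (hP : IsBoundedC1Kernel P) (hP' : IsBoundedC1Kernel P') (z ζ : ℝ) :
    kernelMul c U (derivFst V) z ζ + kernelMul c (derivSnd U) V z ζ = U z c * V c ζ := by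
  have hV' : IntegrableOn (fun ξ => U z ξ * derivFst V ξ ζ) (Set.Iic c) := by
    rw [hV.derivFst_eq hP']
    exact hP'.isBoundedKernel_derivFst.integrable_mul_add_integral (hU.integrable_snd z)
      (hV.integrable_fst ζ) ζ
  have hU' : IntegrableOn (fun ξ => derivSnd U z ξ * V ξ ζ) (Set.Iic c) := by
    rw [hU.derivSnd_eq hP]
    exact hP.isBoundedKernel_derivSnd.integrable_add_integral_mul (hU.integrable_snd z)
      (hV.integrable_fst ζ) z
  have hUV : IntegrableOn (fun ξ => U z ξ * V ξ ζ) (Set.Iic c) :=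
    hV.integrableOn_mul_right hP'.isBoundedKernel (hU.integrable_snd z) ζ
  have hderiv : ∀ ξ ∈ Set.Iic c, HasDerivAt (fun ξ => U z ξ * V ξ ζ)
      (derivSnd U z ξ * V ξ ζ + U z ξ * derivFst V ξ ζ) ξ := fun ξ _ =>
    (hU.hasDerivAt_snd hP z ξ).differentiableAt.hasDerivAt.fun_mul
      (hV.hasDerivAt_fst hP' ξ ζ).differentiableAt.hasDerivAt
  have hlim : Tendsto (fun ξ => U z ξ * V ξ ζ) atBot (nhds 0) :=
    tendsto_zero_of_hasDerivAt_of_integrableOn_Iic hderiv (hU'.add hV') hUV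
  calc kernelMul c U (derivFst V) z ζ + kernelMul c (derivSnd U) V z ζ
      = ∫ ξ in Set.Iic c, derivSnd U z ξ * V ξ ζ + U z ξ * derivFst V ξ ζ := by
        rw [add_comm, integral_add hU' hV', kernelMul, kernelMul]
    _ = U z c * V c ζ := by
        rw [integral_Iic_of_hasDerivAt_of_tendsto' hderiv (hU'.add hV') hlim, sub_zero]

theorem sandwich_derivFst_sub_derivSnd (hU : IsResolventKernel c (-P) U)
    (hV : IsResolventKernel c P V) (hP : IsBoundedC1Kernel P) (z ζ : ℝ) :
    sandwich c U (derivFst P - derivSnd P) V z ζ =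
      derivFst V z ζ + derivSnd U z ζ + U z c * V c ζ := by
  have hU_int := hU.integrable_snd z
  have hV_int := hV.integrable_fst ζ
  rw [sub_eq_add_neg, ← derivSnd_neg, sandwich_add hP.isBoundedKernel_derivFst
      hP.neg.isBoundedKernel_derivSnd hU_int hV_int, hV.sandwich_derivFst hP hU_int,
    hU.sandwich_derivSnd hP.neg hV_int,
    ← hU.kernelMul_derivFst_add_kernelMul_derivSnd hV hP.neg hP]
  abel

end IsResolventKernel

/-- `w x` is the resolvent kernel on `(-∞, 0]` of the translate of `p` by `x`, and depends
continuously differentiably on all variables. -/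
structure IsResolventFamily (p : ℝ → ℝ → E) (w : ℝ → ℝ → ℝ → E) : Prop where
  contDiff : ContDiff ℝ 1 fun v : ℝ × ℝ × ℝ => w v.1 v.2.1 v.2.2
  isResolventKernel : ∀ x, IsResolventKernel 0 (translate x p) (w x)

namespace IsResolventFamily

variable {p : ℝ → ℝ → E} {w : ℝ → ℝ → ℝ → E}

lemma differentiableAt_param (hw : IsResolventFamily p w) (x z ζ : ℝ) :
    DifferentiableAt ℝ (w · z ζ) x :=
  (hw.contDiff.comp (contDiff_prodMk_left (z, ζ))).differentiable one_ne_zero x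

theorem deriv_param [CompleteSpace E] (hw : IsResolventFamily p w) (hp : IsBoundedKernel p)
    (x z ζ : ℝ) :
    deriv (w · z ζ) x = derivFst (w x) z ζ + derivSnd (w x) z ζ + w x z 0 * w x 0 ζ := by
  have hsub (y : ℝ) : w y (z + x - y) (ζ + x - y) - w x (z + x - x) (ζ + x - x) =
      ∫ ξ in x..y, w y (z + x - y) (ξ - y) * w x (ξ - x) (ζ + x - x) := by
    have hx := zero_add x ▸ (hw.isResolventKernel x).untranslate
    have hy := zero_add y ▸ (hw.isResolventKernel y).untranslate
    exact hx.resolvent_identity hy hp (z + x) (ζ + x)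
  have hcont : Continuous fun v : ℝ × ℝ =>
      w v.1 (z + x - v.1) (v.2 - v.1) * w x (v.2 - x) (ζ + x - x) := by
    have hw_comp {f g h : ℝ × ℝ → ℝ} (hf : Continuous f) (hg : Continuous g)
        (hh : Continuous h) : Continuous fun v => w (f v) (g v) (h v) :=
      hw.contDiff.continuous.comp (hf.prodMk (hg.prodMk hh))
    exact (hw_comp (by fun_prop) (by fun_prop) (by fun_prop)).mul
      (hw_comp (by fun_prop) (by fun_prop) (by fun_prop))
  have hdiagonal := hasDerivAt_of_sub_eq_intervalIntegral hcont hsub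
  have hdirectional := hasDerivAt_sub_diagonal (hw.contDiff.differentiable one_ne_zero (x, z, ζ))
  have heq := hdirectional.unique hdiagonal
  simp only [add_sub_cancel_right, sub_self] at heq
  rw [← heq]
  abel

end IsResolventFamily

theorem miura_transformation_general [CompleteSpace E] {p : ℝ → ℝ → E} {wp wm : ℝ → ℝ → ℝ → E}
    (hp : IsBoundedC1Kernel p) (hwp : IsResolventFamily p wp) (hwm : IsResolventFamily (-p) wm)
    (x z ζ : ℝ) :
    deriv (fun x' => wp x' z ζ - wm x' z ζ) x
        + (wp x z 0 - wm x z 0) * (wp x 0 ζ - wm x 0 ζ)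
        + (sandwich 0 (wm x) (translate x (derivFst p - derivSnd p)) (wp x) z ζ
          - sandwich 0 (wp x) (translate x (derivFst p - derivSnd p)) (wm x) z ζ) =
      2 • deriv (wp · z ζ) x := by
  rw [translate_derivFst_sub_derivSnd]
  set P := translate x p
  have hP : IsBoundedC1Kernel P := hp.translate x
  have hV : IsResolventKernel 0 P (wp x) := hwp.isResolventKernel x
  have hU : IsResolventKernel 0 (-P) (wm x) := hwm.isResolventKernel x
  have hq_neg : derivFst P - derivSnd P = -(derivFst (-P) - derivSnd (-P)) := by
    rw [derivFst_neg, derivSnd_neg]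
    abel
  have hKm := hU.sandwich_derivFst_sub_derivSnd hV hP z ζ
  have hKp : sandwich 0 (wp x) (derivFst P - derivSnd P) (wm x) z ζ =
      -(derivFst (wm x) z ζ + derivSnd (wp x) z ζ + wp x z 0 * wm x 0 ζ) := by
    rw [hq_neg, sandwich_neg, Pi.neg_apply, Pi.neg_apply,
      IsResolventKernel.sandwich_derivFst_sub_derivSnd ((neg_neg P).symm ▸ hV) hU hP.neg]
  rw [deriv_fun_sub (hwp.differentiableAt_param x z ζ) (hwm.differentiableAt_param x z ζ),
    hwp.deriv_param hp.isBoundedKernel, hwm.deriv_param hp.neg.isBoundedKernel, hKm, hKp]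
  noncomm_ring

end AlgebraValued

section MatrixKernels

open scoped Matrix.Norms.L2Operator

variable {m : ℕ}

/-- The entries of a matrix, as a continuous linear equivalence for the operator norm: analytic
notions for matrix-valued functions can thus be checked entrywise. -/
noncomputable def entriesEquiv (m : ℕ) : Mat m ≃L[ℝ] (Fin m → Fin m → ℂ) :=
  (Matrix.ofLinearEquiv ℝ).symm.toContinuousLinearEquiv

/-- The `(i, j)` entry of a matrix, as a continuous linear map. -/
noncomputable def entryCLM (i j : Fin m) : Mat m →L[ℝ] ℂ :=
  (ContinuousLinearMap.proj j).comp
    ((ContinuousLinearMap.proj i).comp (entriesEquiv m).toContinuousLinearMap)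

lemma contDiff_of_entries {X : Type*} [NormedAddCommGroup X] [NormedSpace ℝ X] {n : WithTop ℕ∞}
    {f : X → Mat m} (hf : ∀ i j, ContDiff ℝ n (f · i j)) : ContDiff ℝ n f :=
  (entriesEquiv m).comp_contDiff_iff.mp (contDiff_pi.mpr fun i => contDiff_pi.mpr (hf i))

lemma integrable_of_entries {X : Type*} [MeasurableSpace X] {μ : Measure X} {f : X → Mat m}
    (hf : ∀ i j, Integrable (f · i j) μ) : Integrable f μ :=
  (entriesEquiv m).integrable_comp_iff.mp (.of_eval fun i => .of_eval (hf i))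

lemma integral_apply_apply {X : Type*} [MeasurableSpace X] {μ : Measure X} {f : X → Mat m}
    (hf : Integrable f μ) (i j : Fin m) : (∫ v, f v ∂μ) i j = ∫ v, f v i j ∂μ :=
  ((entryCLM i j).integral_comp_comm hf).symm

lemma deriv_apply_apply {f : ℝ → Mat m} {x : ℝ} (hf : DifferentiableAt ℝ f x) (i j : Fin m) :
    deriv f x i j = deriv (f · i j) x :=
  ((entryCLM i j).hasFDerivAt.comp_hasDerivAt x hf.hasDerivAt).deriv.symm

lemma bounded_of_entries {k : Ker m} (hk : ∃ C, ∀ z ζ i j, ‖k z ζ i j‖ ≤ C) :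
    ∃ C, ∀ z ζ, ‖k z ζ‖ ≤ C := by
  obtain ⟨C, hC⟩ := hk
  refine ⟨‖(entriesEquiv m).symm.toContinuousLinearMap‖ * |C|, fun z ζ => ?_⟩
  have hentries : ‖entriesEquiv m (k z ζ)‖ ≤ |C| :=
    (pi_norm_le_iff_of_nonneg (abs_nonneg C)).mpr fun i =>
      (pi_norm_le_iff_of_nonneg (abs_nonneg C)).mpr fun j => (hC z ζ i j).trans (le_abs_self C)
  simpa using (entriesEquiv m).symm.toContinuousLinearMap.le_of_opNorm_le_of_le le_rfl hentries

lemma conv_eq_kernelMul_apply {k₁ k₂ : Ker m} {z ζ : ℝ}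
    (h : IntegrableOn (fun ξ => k₁ z ξ * k₂ ξ ζ) (Set.Iic 0)) :
    conv k₁ k₂ z ζ = kernelMul 0 k₁ k₂ z ζ := by
  ext i j
  exact (integral_apply_apply h i j).symm

lemma D3_one_zero_zero {u : ℝ → ℝ → ℝ → Mat m} {x y t : ℝ}
    (hu : DifferentiableAt ℝ (u · y t) x) : D3 1 0 0 u x y t = deriv (u · y t) x := by
  ext i j
  simp only [D3, Matrix.of_apply, iteratedDeriv_one, iteratedDeriv_zero, deriv_apply_apply hu]

section Scattering

variable {p : Ker4 m} (y t : ℝ)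

lemma IsScattering4.contDiff_slice (hp : IsScattering4 p) :
    ContDiff ℝ 1 fun v : ℝ × ℝ => p v.1 v.2 y t :=
  ((contDiff_of_entries hp.1).of_le (m := 1) (mod_cast le_top)).comp
    (contDiff_fst.prodMk (contDiff_snd.prodMk (contDiff_const (c := (y, t)))))

lemma IsScattering4.pder4_one_zero (hp : IsScattering4 p) (z ζ : ℝ) :
    pder4 1 0 p z ζ y t = derivFst (p · · y t) z ζ := by
  ext i j
  have hdiff : Differentiable ℝ (p · ζ y t) :=
    ((hp.contDiff_slice y t).comp (contDiff_prodMk_left ζ)).differentiable one_ne_zero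
  simp only [pder4, derivFst, Matrix.of_apply, iteratedDeriv_one, iteratedDeriv_zero,
    deriv_apply_apply (hdiff z)]

lemma IsScattering4.pder4_zero_one (hp : IsScattering4 p) (z ζ : ℝ) :
    pder4 0 1 p z ζ y t = derivSnd (p · · y t) z ζ := by
  ext i j
  have hdiff : Differentiable ℝ (p z · y t) :=
    ((hp.contDiff_slice y t).comp (contDiff_prodMk_right z)).differentiable one_ne_zero
  simp only [pder4, derivSnd, Matrix.of_apply, iteratedDeriv_one, iteratedDeriv_zero,
    deriv_apply_apply (hdiff ζ)]

lemma IsScattering4.isBoundedC1Kernel (hp : IsScattering4 p) :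
    IsBoundedC1Kernel (p · · y t) where
  contDiff := hp.contDiff_slice y t
  bounded := bounded_of_entries (by
    simpa only [pder4, Matrix.of_apply, iteratedDeriv_zero] using (hp.2 0 0 y t).1)
  bounded_derivFst := by
    simpa only [hp.pder4_one_zero] using bounded_of_entries (hp.2 1 0 y t).1
  bounded_derivSnd := by
    simpa only [hp.pder4_zero_one] using bounded_of_entries (hp.2 0 1 y t).1

lemma IsScattering4.qXK_eq (hp : IsScattering4 p) (x : ℝ) :
    qXK p x y t = translate x (derivFst (p · · y t) - derivSnd (p · · y t)) := by
  ext1 z; ext1 ζ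
  simp only [qXK, hp.pder4_one_zero, hp.pder4_zero_one]
  rfl

lemma IsScattering4.isBoundedKernel_qXK (hp : IsScattering4 p) (x : ℝ) :
    IsBoundedKernel (qXK p x y t) := by
  have hP := (hp.isBoundedC1Kernel y t).translate x
  rw [hp.qXK_eq, translate_derivFst_sub_derivSnd]
  exact hP.isBoundedKernel_derivFst.sub hP.isBoundedKernel_derivSnd

end Scattering

section Resolvents

lemma conv_eq_kernelMul_of_left {P W : Ker m} (hP : IsBoundedKernel P)
    (hW : ∀ ζ, IntegrableOn (W · ζ) (Set.Iic 0)) : conv P W = kernelMul 0 P W :=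
  funext₂ fun z ζ => conv_eq_kernelMul_apply (hP.integrable_mul_left (hW ζ) z)

lemma conv_eq_kernelMul_of_right {P W : Ker m} (hP : IsBoundedKernel P)
    (hW : ∀ z, IntegrableOn (W z) (Set.Iic 0)) : conv W P = kernelMul 0 W P :=
  funext₂ fun z ζ => conv_eq_kernelMul_apply (hP.integrable_mul_right (hW z) ζ)

lemma conv_neg_left (k₁ k₂ : Ker m) : conv (-k₁) k₂ = -conv k₁ k₂ := by
  ext z ζ i j
  simp only [conv, Pi.neg_apply, Matrix.neg_mul, Matrix.neg_apply, Matrix.of_apply, integral_neg]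

lemma conv_neg_right (k₁ k₂ : Ker m) : conv k₁ (-k₂) = -conv k₁ k₂ := by
  ext z ζ i j
  simp only [conv, Pi.neg_apply, Matrix.mul_neg, Matrix.neg_apply, Matrix.of_apply, integral_neg]

lemma sandwich_eq_conv {U Q V : Ker m} (hQ : IsBoundedKernel Q)
    (hU : ∀ z, IntegrableOn (U z) (Set.Iic 0)) (hV : ∀ ζ, IntegrableOn (V · ζ) (Set.Iic 0)) :
    sandwich 0 U Q V = Q + conv U Q + conv Q V + conv U (conv Q V) := by
  have hUQV : conv U (kernelMul 0 Q V) = kernelMul 0 U (kernelMul 0 Q V) :=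
    funext₂ fun z ζ => conv_eq_kernelMul_apply (hQ.integrable_mul_integral (hU z) (hV ζ))
  rw [conv_eq_kernelMul_of_left hQ hV, conv_eq_kernelMul_of_right hQ hU, hUQV, sandwich]

variable {p : Ker4 m} {w : ℝ → ℝ → ℝ → ℝ → ℝ → Mat m}

lemma contDiff_slice_of_entries (hw : ∀ i j : Fin m, ContDiff ℝ (⊤ : ℕ∞)
      (fun v : ℝ × ℝ × ℝ × ℝ × ℝ => w v.1 v.2.1 v.2.2.1 v.2.2.2.1 v.2.2.2.2 i j)) (y t : ℝ) :
    ContDiff ℝ 1 fun v : ℝ × ℝ × ℝ => w v.2.1 v.2.2 v.1 y t :=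
  ((contDiff_of_entries hw).of_le (m := 1) (mod_cast le_top)).comp
    (contDiff_snd.fst.prodMk (contDiff_snd.snd.prodMk (contDiff_fst.prodMk
      (contDiff_const (c := (y, t))))))

lemma isResolventKernel_of_conv {P W : Ker m} (hP : IsBoundedKernel P) (hW : KernelDecay W)
    (hleft : W = P + conv P W) (hright : W = P + conv W P) : IsResolventKernel 0 P W := by
  have hfst (ζ : ℝ) : IntegrableOn (W · ζ) (Set.Iic 0) := integrable_of_entries (hW.2.1 ζ)
  have hsnd (z : ℝ) : IntegrableOn (W z) (Set.Iic 0) := integrable_of_entries (hW.2.2.1 z)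
  rw [conv_eq_kernelMul_of_left hP hfst] at hleft
  rw [conv_eq_kernelMul_of_right hP hsnd] at hright
  exact ⟨hfst, hsnd, hleft, hright⟩

lemma D5_zero : D5 0 0 0 0 0 w = w := by
  ext z ζ x y t i j
  simp only [D5, Matrix.of_apply, iteratedDeriv_zero]

lemma IsResolvent4Plus.isResolventFamily (hw : IsResolvent4Plus p w) (hp : IsScattering4 p)
    (y t : ℝ) : IsResolventFamily (p · · y t) fun x z ζ => w z ζ x y t where
  contDiff := contDiff_slice_of_entries hw.1 y t
  isResolventKernel x :=
    isResolventKernel_of_conv ((hp.isBoundedC1Kernel y t).translate x).isBoundedKernel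
      (D5_zero (w := w) ▸ hw.2.1 0 0 0 0 0 x y t) (hw.2.2.1 x y t) (hw.2.2.2 x y t)

lemma IsResolvent4Minus.isResolventFamily (hw : IsResolvent4Minus p w) (hp : IsScattering4 p)
    (y t : ℝ) : IsResolventFamily (-(p · · y t)) fun x z ζ => w z ζ x y t where
  contDiff := contDiff_slice_of_entries hw.1 y t
  isResolventKernel x := by
    have hleft := hw.2.2.1 x y t
    have hright := hw.2.2.2 x y t
    rw [sub_eq_add_neg, ← conv_neg_left] at hleft
    rw [sub_eq_add_neg, ← conv_neg_right] at hright
    exact isResolventKernel_of_conv ((hp.isBoundedC1Kernel y t).translate x).isBoundedKernel.neg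
      (D5_zero (w := w) ▸ hw.2.1 0 0 0 0 0 x y t) hleft hright

end Resolvents

section Miura

variable {p : Ker4 m} {wp wm : ℝ → ℝ → ℝ → ℝ → ℝ → Mat m}

lemma Kplus_eq_sandwich (hp : IsScattering4 p) (hwp : IsResolvent4Plus p wp)
    (hwm : IsResolvent4Minus p wm) (x y t : ℝ) :
    Kplus p wp wm x y t = sandwich 0 (wp · · x y t) (qXK p x y t) (wm · · x y t) :=
  (sandwich_eq_conv (hp.isBoundedKernel_qXK y t x)
    ((hwp.isResolventFamily hp y t).isResolventKernel x).integrable_snd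
    ((hwm.isResolventFamily hp y t).isResolventKernel x).integrable_fst).symm

lemma Kminus_eq_sandwich (hp : IsScattering4 p) (hwp : IsResolvent4Plus p wp)
    (hwm : IsResolvent4Minus p wm) (x y t : ℝ) :
    Kminus p wp wm x y t = sandwich 0 (wm · · x y t) (qXK p x y t) (wp · · x y t) :=
  (sandwich_eq_conv (hp.isBoundedKernel_qXK y t x)
    ((hwm.isResolventFamily hp y t).isResolventKernel x).integrable_snd
    ((hwp.isResolventFamily hp y t).isResolventKernel x).integrable_fst).symm

end Miura

end MatrixKernels

/-- **Miura transformation between the lifted mKP and KP solution forms.**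
With the lifted mKP components `g := (w₊−w₋)(0,0;x,y,t)` and
`f := (K₋−K₊)(0,0;x,y,t)`, and the KP component `g^{KP} := w₊(0,0;x,y,t)`
(the kernel of `G = PV` solving the GLM equation `P = G(id − P)`), the Miura
relation `∂_x g + g² + f = 2 ∂_x g^{KP}` holds exactly. -/
theorem miura_transformation {m : ℕ} (p : Ker4 m) (hp : IsScattering4 p)
    (wp wm : ℝ → ℝ → ℝ → ℝ → ℝ → Mat m)
    (hwp : IsResolvent4Plus p wp) (hwm : IsResolvent4Minus p wm)
    (g f gKP : ℝ → ℝ → ℝ → Mat m)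
    (hg : ∀ x y t : ℝ, g x y t = wp 0 0 x y t - wm 0 0 x y t)
    (hf : ∀ x y t : ℝ, f x y t = Kminus p wp wm x y t 0 0 - Kplus p wp wm x y t 0 0)
    (hgKP : ∀ x y t : ℝ, gKP x y t = wp 0 0 x y t) :
    ∀ x y t : ℝ,
      D3 1 0 0 g x y t + g x y t * g x y t + f x y t
        = (2:ℕ) • D3 1 0 0 gKP x y t := by
  intro x y t
  obtain rfl : g = fun x y t => wp 0 0 x y t - wm 0 0 x y t := funext₃ hg
  obtain rfl : gKP = wp 0 0 := funext₃ hgKP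
  open scoped Matrix.Norms.L2Operator in
  have hV := hwp.isResolventFamily hp y t
  have hU := hwm.isResolventFamily hp y t
  have hVdiff := hV.differentiableAt_param x 0 0
  have hUdiff := hU.differentiableAt_param x 0 0
  rw [D3_one_zero_zero hVdiff, D3_one_zero_zero (hVdiff.fun_sub hUdiff), hf,
    Kminus_eq_sandwich hp hwp hwm, Kplus_eq_sandwich hp hwp hwm, hp.qXK_eq]
  exact miura_transformation_general (hp.isBoundedC1Kernel y t) hV hU x 0 0

end NCKP
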